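/- Let $M$ be a simple matroid on a finite ground set $E$ with rank function $r:\mathcal P(E)\to\mathbb N$ (that is, $r(A)\le |A|$, $r$ is monotone and submodular, and every one- and two-element subset of $E$ is independent, where $A\subseteq E$ is independent if $r(A)=|A|$), and let $F$ be a field. A circuit of $M$ is a minimal dependent set. Then the following are equivalent. (i) $M$ is multilinear over $F$: there exist an integer $c\ge 1$, a finite-dimensional $F$-vector space $V$ and subspaces $\{W_e\}_{e\in E}$ of $V$ such that $\dim\bigl(\sum_{e\in S}W_e\bigr)=c\cdot r(S)$ for every $S\subseteq E$. (ii) $M$ has a vector space representation over $F$: there exist an integer $c\ge 1$, a finite-dimensional $F$-vector space $V$, $F$-vector spaces $\{W_e\}_{e\in E}$ with $\dim W_e=c$, and linear maps $T_e:V\to W_e$ such that, writing $T_A:V\to\bigoplus_{e\in A}W_e$, $v\mapsto (T_e v)_{e\in A}$, for $A\subseteq E$: (1) $T_A$ has rank $c\cdot|A|$ for every independent set $A\subseteq E$; (2) for every circuit $C$ of $M$ and every $x\in C$ there is a linear map $S:\bigoplus_{e\in C\setminus\{x\}}W_e\to W_x$ with $T_x=S\circ T_{C\setminus\{x\}}$.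 -/

import Mathlib

universe u v

/-- A matroid on the ground set `E`, given by its rank function. (`E` is assumed finite wherever
the structure is used.) -/
structure RankMatroid (E : Type v) [DecidableEq E] where
  /-- the rank function -/
  r : Finset E → ℕ
  r_le_card : ∀ A : Finset E, r A ≤ A.card
  r_mono : ∀ A B : Finset E, A ⊆ B → r A ≤ r B
  r_submod : ∀ A B : Finset E, r (A ∪ B) + r (A ∩ B) ≤ r A + r B

namespace RankMatroid

/-- `A` is independent if `r(A) = |A|`. -/
def Indep {E : Type v} [DecidableEq E] (M : RankMatroid E) (A : Finset E) : Prop :=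
  M.r A = A.card

/-- A circuit is a dependent set all of whose proper subsets are independent. -/
def IsCircuit {E : Type v} [DecidableEq E] (M : RankMatroid E) (C : Finset E) : Prop :=
  ¬ M.Indep C ∧ ∀ D : Finset E, D ⊂ C → M.Indep D

/-- `M` is simple if every one- and two-element subset of `E` is independent
(the case `e = f` gives the one-element subsets). -/
def IsSimple {E : Type v} [DecidableEq E] (M : RankMatroid E) : Prop :=
  ∀ e f : E, M.Indep {e, f}

end RankMatroid

/-- The joint map `T_S : V → ⊕_{e∈S} W_e`, `v ↦ (T_e v)_{e∈S}`. -/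
def jointMap {F : Type*} [Field F] {E : Type*} {V : Type*} [AddCommGroup V] [Module F V]
    {W : E → Type*} [∀ e, AddCommGroup (W e)] [∀ e, Module F (W e)]
    (T : ∀ e, V →ₗ[F] W e) (S : Finset E) : V →ₗ[F] ((e : ↥S) → W e.1) :=
  LinearMap.pi fun e => T e.1

/-- A multilinear representation of `M` over `F`: `c ≥ 1`, a finite-dimensional `F`-vector
space `V` and subspaces `W_e ≤ V` with `dim(Σ_{e∈S} W_e) = c·r(S)` for every `S`.
Every finite-dimensional `F`-vector space is isomorphic to some `Fin n → F`, so that letting `V`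
range over the universe of `F` loses nothing. -/
structure MultilinearRep (F : Type u) [Field F] {E : Type v} [DecidableEq E]
    (M : RankMatroid E) where
  c : ℕ
  one_le_c : 1 ≤ c
  V : Type u
  [addCommGroupV : AddCommGroup V]
  [moduleV : Module F V]
  [finiteDimensionalV : FiniteDimensional F V]
  W : E → Submodule F V
  finrank_sum : ∀ S : Finset E, Module.finrank F ↥(⨆ e ∈ S, W e) = c * M.r S

/-- A vector space representation of `M` over `F`: `c ≥ 1`, a finite-dimensional `F`-vector
space `V`, spaces `W_e` with `dim W_e = c`, and linear maps `T_e : V → W_e` such that the joint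
map `T_A` has rank `c·|A|` for every independent `A`, and, for every circuit `C` and `x ∈ C`,
`T_x = S ∘ T_{C∖{x}}` for some linear map `S`. As in `MultilinearRep`, the spaces range over the
universe of `F`. -/
structure VectorSpaceRep (F : Type u) [Field F] {E : Type v} [DecidableEq E]
    (M : RankMatroid E) where
  c : ℕ
  one_le_c : 1 ≤ c
  V : Type u
  [addCommGroupV : AddCommGroup V]
  [moduleV : Module F V]
  [finiteDimensionalV : FiniteDimensional F V]
  W : E → Type u
  [addCommGroupW : ∀ e, AddCommGroup (W e)]
  [moduleW : ∀ e, Module F (W e)]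
  [finiteDimensionalW : ∀ e, FiniteDimensional F (W e)]
  finrank_W : ∀ e, Module.finrank F (W e) = c
  T : ∀ e, V →ₗ[F] W e
  independent : ∀ A : Finset E, M.Indep A →
    Module.finrank F ↥(LinearMap.range (jointMap T A)) = c * A.card
  determined : ∀ C : Finset E, M.IsCircuit C → ∀ x ∈ C,
    ∃ S : ((e : ↥(C.erase x)) → W e.1) →ₗ[F] W x, T x = S ∘ₗ jointMap T (C.erase x)

/-- `M` is multilinear over `F`. -/
def IsMultilinear (F : Type u) [Field F] {E : Type v} [DecidableEq E]
    (M : RankMatroid E) : Prop :=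
  Nonempty (MultilinearRep F M)

/-- `M` has a vector space representation over `F`. -/
def HasVectorSpaceRep (F : Type u) [Field F] {E : Type v} [DecidableEq E]
    (M : RankMatroid E) : Prop :=
  Nonempty (VectorSpaceRep F M)

section LinearAlgebra

variable {F E V : Type*} [Field F] [AddCommGroup V] [Module F V]

lemma ker_jointMap {W : E → Type*} [∀ e, AddCommGroup (W e)] [∀ e, Module F (W e)]
    (T : ∀ e, V →ₗ[F] W e) (S : Finset E) :
    LinearMap.ker (jointMap T S) = ⨅ e ∈ S, LinearMap.ker (T e) := by
  rw [jointMap, LinearMap.ker_pi, iInf_subtype']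

lemma exists_eq_comp_of_ker_le {U W : Type*} [AddCommGroup U] [Module F U]
    [AddCommGroup W] [Module F W] (f : V →ₗ[F] U) (g : V →ₗ[F] W)
    (h : LinearMap.ker f ≤ LinearMap.ker g) : ∃ S : U →ₗ[F] W, g = S ∘ₗ f := by
  obtain ⟨S, hS⟩ := LinearMap.exists_extend
    ((LinearMap.ker f).liftQ g h ∘ₗ f.quotKerEquivRange.symm.toLinearMap)
  refine ⟨S, LinearMap.ext fun v => ?_⟩
  have hv := LinearMap.congr_fun hS (f.quotKerEquivRange (Submodule.Quotient.mk v))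
  simpa using hv.symm

lemma dualAnnihilator_biSup (S : Finset E) (W : E → Submodule F V) :
    (⨆ e ∈ S, W e).dualAnnihilator = ⨅ e ∈ S, (W e).dualAnnihilator := by
  simp only [Submodule.dualAnnihilator_iSup_eq]

lemma dualAnnihilator_biInf [FiniteDimensional F V] (S : Finset E) (K : E → Submodule F V) :
    (⨅ e ∈ S, K e).dualAnnihilator = ⨆ e ∈ S, (K e).dualAnnihilator := by
  rw [iInf_subtype', iSup_subtype']
  exact Subspace.dualAnnihilator_iInf_eq fun e : ↥S => K e

/-- The restriction maps `V* → W_e*` have joint rank `dim (Σ W_e)`. -/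
lemma finrank_range_jointMap_dualRestrict [FiniteDimensional F V] (W : E → Submodule F V)
    (S : Finset E) :
    Module.finrank F (LinearMap.range (jointMap (fun e => (W e).dualRestrict) S)) =
      Module.finrank F ↥(⨆ e ∈ S, W e) := by
  have h₁ := LinearMap.finrank_range_add_finrank_ker (jointMap (fun e => (W e).dualRestrict) S)
  have h₂ := Subspace.finrank_add_finrank_dualAnnihilator_eq (⨆ e ∈ S, W e)
  have h₃ : LinearMap.ker (jointMap (fun e => (W e).dualRestrict) S) =
      (⨆ e ∈ S, W e).dualAnnihilator := by
    simp only [ker_jointMap, Submodule.dualRestrict_ker_eq_dualAnnihilator, dualAnnihilator_biSup]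
  rw [h₃, Subspace.dual_finrank_eq] at h₁
  omega

/-- The annihilators of the kernels of the `T_e` span a space of dimension the joint rank. -/
lemma finrank_biSup_dualAnnihilator_ker [FiniteDimensional F V] {W : E → Type*}
    [∀ e, AddCommGroup (W e)] [∀ e, Module F (W e)] (T : ∀ e, V →ₗ[F] W e) (S : Finset E) :
    Module.finrank F ↥(⨆ e ∈ S, (LinearMap.ker (T e)).dualAnnihilator) =
      Module.finrank F (LinearMap.range (jointMap T S)) := by
  have h₁ := LinearMap.finrank_range_add_finrank_ker (jointMap T S)
  have h₂ := Subspace.finrank_add_finrank_dualAnnihilator_eq (LinearMap.ker (jointMap T S))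
  rw [← dualAnnihilator_biInf, ← ker_jointMap]
  omega

end LinearAlgebra

namespace RankMatroid

variable {E : Type*} [DecidableEq E] (M : RankMatroid E)

lemma indep_empty : M.Indep ∅ := Nat.le_zero.mp (M.r_le_card ∅)

lemma IsCircuit.r_erase {M : RankMatroid E} {C : Finset E} (hC : M.IsCircuit C) {x : E}
    (hx : x ∈ C) : M.r (C.erase x) = M.r C := by
  have h₁ : M.r (C.erase x) = (C.erase x).card := hC.2 _ (Finset.erase_ssubset hx)
  have h₂ := M.r_mono _ _ (Finset.erase_subset x C)
  have h₃ := M.r_le_card C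
  have h₄ : M.r C ≠ C.card := hC.1
  have h₅ := Finset.card_erase_add_one hx
  omega

lemma Indep.subset {M : RankMatroid E} {A B : Finset E} (hB : M.Indep B) (h : A ⊆ B) :
    M.Indep A := by
  have h₁ := M.r_submod A (B \ A)
  have h₂ := M.r_le_card A
  have h₃ := M.r_le_card (B \ A)
  have h₄ := Finset.card_sdiff_add_card_eq_card h
  have h₅ : M.r B = B.card := hB
  rw [Finset.union_sdiff_of_subset h] at h₁
  unfold Indep
  omega

lemma exists_isCircuit_subset {A : Finset E} (hA : ¬ M.Indep A) : ∃ C ⊆ A, M.IsCircuit C := by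
  induction A using Finset.strongInduction with
  | H A ih =>
    by_cases h : ∀ D : Finset E, D ⊂ A → M.Indep D
    · exact ⟨A, subset_rfl, hA, h⟩
    · push Not at h
      obtain ⟨D, hD, hDi⟩ := h
      obtain ⟨C, hC, hCc⟩ := ih D hD hDi
      exact ⟨C, hC.trans hD.subset, hCc⟩

lemma exists_isCircuit_of_insert {I : Finset E} (hI : M.Indep I) {x : E}
    (hx : ¬ M.Indep (insert x I)) : ∃ C, M.IsCircuit C ∧ x ∈ C ∧ C.erase x ⊆ I := by
  obtain ⟨C, hC, hCc⟩ := M.exists_isCircuit_subset hx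
  refine ⟨C, hCc, ?_, Finset.subset_insert_iff.mp hC⟩
  by_contra h
  exact hCc.1 (hI.subset ((Finset.subset_insert_iff_of_notMem h).mp hC))

/-- Every set has a maximal independent subset. -/
lemma exists_maximal_indep_subset (S : Finset E) :
    ∃ I ⊆ S, M.Indep I ∧ ∀ x ∈ S, x ∉ I → ¬ M.Indep (insert x I) := by
  classical
  obtain ⟨I, hI, hmax⟩ := (S.powerset.filter M.Indep).exists_max_image Finset.card
    ⟨∅, by simpa using M.indep_empty⟩
  simp only [Finset.mem_filter, Finset.mem_powerset] at hI hmax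
  refine ⟨I, hI.1, hI.2, fun x hx hxI h => ?_⟩
  have := hmax _ ⟨Finset.insert_subset hx hI.1, h⟩
  rw [Finset.card_insert_of_notMem hxI] at this
  omega

lemma r_union_eq_of_forall_insert {I J : Finset E} (h : ∀ x ∈ J, M.r (insert x I) = M.r I) :
    M.r (I ∪ J) = M.r I := by
  induction J using Finset.induction_on with
  | empty => simp
  | insert x J _ ih =>
    have ih := ih fun y hy => h y (Finset.mem_insert_of_mem hy)
    have hx := h x (Finset.mem_insert_self x J)
    have h₁ := M.r_submod (I ∪ J) (insert x I)
    have h₂ := M.r_mono I ((I ∪ J) ∩ insert x I)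
      (Finset.subset_inter Finset.subset_union_left (Finset.subset_insert x I))
    have h₃ := M.r_mono I (I ∪ insert x J) Finset.subset_union_left
    have h₄ : I ∪ J ∪ insert x I = I ∪ insert x J := by grind
    rw [h₄] at h₁
    omega

lemma r_eq_card_of_maximal {I S : Finset E} (hIS : I ⊆ S) (hI : M.Indep I)
    (hmax : ∀ x ∈ S, x ∉ I → ¬ M.Indep (insert x I)) : M.r S = I.card := by
  have hI' : M.r I = I.card := hI
  rw [← hI', ← Finset.union_eq_right.mpr hIS]
  refine M.r_union_eq_of_forall_insert fun x hx => ?_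
  by_cases hxI : x ∈ I
  · rw [Finset.insert_eq_of_mem hxI]
  · have h₁ : M.r (insert x I) ≠ (insert x I).card := hmax x hx hxI
    have h₂ := M.r_le_card (insert x I)
    have h₃ := M.r_mono _ _ (Finset.subset_insert x I)
    rw [Finset.card_insert_of_notMem hxI] at h₁ h₂
    omega

end RankMatroid

attribute [instance] MultilinearRep.addCommGroupV MultilinearRep.moduleV
  MultilinearRep.finiteDimensionalV VectorSpaceRep.addCommGroupV VectorSpaceRep.moduleV
  VectorSpaceRep.finiteDimensionalV VectorSpaceRep.addCommGroupW VectorSpaceRep.moduleW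
  VectorSpaceRep.finiteDimensionalW

section Representations

variable {F : Type u} [Field F] {E : Type v} [DecidableEq E] {M : RankMatroid E}

/-- In a vector space representation the joint map of any set `S` has rank `c * r(S)`. -/
lemma VectorSpaceRep.finrank_range_jointMap (R : VectorSpaceRep F M) (S : Finset E) :
    Module.finrank F (LinearMap.range (jointMap R.T S)) = R.c * M.r S := by
  obtain ⟨I, hIS, hI, hmax⟩ := M.exists_maximal_indep_subset S
  rw [M.r_eq_card_of_maximal hIS hI hmax, ← R.independent I hI]
  have hker : LinearMap.ker (jointMap R.T S) = LinearMap.ker (jointMap R.T I) := by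
    rw [ker_jointMap, ker_jointMap]
    refine le_antisymm (biInf_mono fun e he => hIS he) (le_iInf₂ fun x hx => ?_)
    by_cases hxI : x ∈ I
    · exact iInf₂_le x hxI
    · obtain ⟨C, hC, hxC, hCI⟩ := M.exists_isCircuit_of_insert hI (hmax x hx hxI)
      obtain ⟨L, hL⟩ := R.determined C hC x hxC
      calc ⨅ e ∈ I, LinearMap.ker (R.T e)
          ≤ ⨅ e ∈ C.erase x, LinearMap.ker (R.T e) := biInf_mono fun e he => hCI he
        _ = LinearMap.ker (jointMap R.T (C.erase x)) := (ker_jointMap _ _).symm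
        _ ≤ LinearMap.ker (R.T x) := by rw [hL]; exact LinearMap.ker_le_ker_comp _ _
  have h₁ := LinearMap.finrank_range_add_finrank_ker (jointMap R.T S)
  have h₂ := LinearMap.finrank_range_add_finrank_ker (jointMap R.T I)
  rw [hker] at h₁
  omega

/-- The dual of a vector space representation: the annihilators of the kernels of the `T_e`. -/
def VectorSpaceRep.toMultilinearRep (R : VectorSpaceRep F M) : MultilinearRep F M where
  c := R.c
  one_le_c := R.one_le_c
  V := Module.Dual F R.V
  W e := (LinearMap.ker (R.T e)).dualAnnihilator
  finrank_sum S := by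
    rw [finrank_biSup_dualAnnihilator_ker, R.finrank_range_jointMap]

/-- The dual of a multilinear representation: the restriction maps `V* → W_e*`. -/
def MultilinearRep.toVectorSpaceRep (R : MultilinearRep F M) (hM : M.IsSimple) :
    VectorSpaceRep F M where
  c := R.c
  one_le_c := R.one_le_c
  V := Module.Dual F R.V
  W e := Module.Dual F (R.W e)
  finrank_W e := by
    have h₁ := R.finrank_sum {e}
    have h₂ : M.r {e} = 1 := by simpa [RankMatroid.Indep] using hM e e
    rw [h₂, mul_one, Finset.iSup_singleton] at h₁
    rw [Subspace.dual_finrank_eq, h₁]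
  T e := (R.W e).dualRestrict
  independent A hA := by
    rw [finrank_range_jointMap_dualRestrict, R.finrank_sum, show M.r A = A.card from hA]
  determined C hC x hx := by
    refine exists_eq_comp_of_ker_le _ _ ?_
    have hsup : ⨆ e ∈ C.erase x, R.W e = ⨆ e ∈ C, R.W e :=
      Submodule.eq_of_le_of_finrank_eq (biSup_mono fun e he => Finset.mem_of_mem_erase he)
        (by rw [R.finrank_sum, R.finrank_sum, hC.r_erase hx])
    simp only [ker_jointMap, Submodule.dualRestrict_ker_eq_dualAnnihilator]
    rw [← dualAnnihilator_biSup, hsup]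
    exact Submodule.dualAnnihilator_anti (le_iSup₂ (f := fun e _ => R.W e) x hx)

end Representations

/-- A simple matroid on a finite ground set is multilinear over a field `F` if and only if it has
a vector space representation over `F`. -/
theorem statement13 {E : Type v} [Fintype E] [DecidableEq E] (F : Type u) [Field F]
    (M : RankMatroid E) (hM : M.IsSimple) :
    IsMultilinear F M ↔ HasVectorSpaceRep F M :=
  ⟨fun ⟨R⟩ => ⟨R.toVectorSpaceRep hM⟩, fun ⟨R⟩ => ⟨R.toMultilinearRep⟩⟩
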